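/- arXiv:2604.21697 — 2 statements merged into one kernel-verified Lean document; each statement's English description precedes it below -/
import Mathlib

section
/- Suppose (φ, θ, u, p̃) are smooth spatially periodic fields on (0,T) × ℝ^d with θ > 0 everywhere that solve the NACNS system (AC), (IE), (NS), (DF). Then for every t ∈ (0,T) one has (d/dt) ∫_Ω e_tot dx = ∫_Ω Q dx + ∫_Ω b·u dx. In particular, if Q ≡ 0 and b ≡ 0, then t ↦ ∫_Ω e_tot dx is constant in time (total energy conservation). -/
/-!
In local form, the total energy obeys `∂ₜ e_tot = div F + Q + b·u`, where
`F = A u - K∇(1/θ) - (e + |u|²/2 + p̃) u` with the stress `A = η Du - σ̃`.  Indeed, the momentum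
equation tested with `u` gives the kinetic energy balance, and the working `A : ∇u` produced by
the product rule in `div (A u)` cancels exactly the dissipation `η|Du|²` and the Korteweg term
`σ̃ : ∇u` of the internal energy equation (by symmetry of `Du`, see `sum_symGrad_mul_pd`), while
incompressibility turns all transport terms into divergences (`divg_energyFlux`).

The flux `F` is periodic and `C¹` in space, so its divergence has zero integral over a period box
(`integral_divg_eq_zero`).  As `e_tot` is jointly `C¹` in time and space (`contDiff_intE`),
differentiation under the integral sign (`hasDerivAt_integral_box`) gives the balance.
-/

open MeasureTheory

noncomputable section

/-- `i`-th spatial partial derivative of a scalar field. -/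
def pd {d : ℕ} (i : Fin d) (g : (Fin d → ℝ) → ℝ) (x : Fin d → ℝ) : ℝ :=
  fderiv ℝ g x (Pi.single i 1)

/-- Spatial gradient of a scalar field. -/
def grad {d : ℕ} (g : (Fin d → ℝ) → ℝ) (x : Fin d → ℝ) : Fin d → ℝ :=
  fun i => pd i g x

/-- Divergence of a vector field. -/
def divg {d : ℕ} (u : (Fin d → ℝ) → Fin d → ℝ) (x : Fin d → ℝ) : ℝ :=
  ∑ i, pd i (fun y => u y i) x

/-- Euclidean dot product. -/
def dot {d : ℕ} (a b : Fin d → ℝ) : ℝ := ∑ i, a i * b i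

/-- Time derivative of a time-dependent scalar field. -/
def dt {d : ℕ} (g : ℝ → (Fin d → ℝ) → ℝ) (t : ℝ) (x : Fin d → ℝ) : ℝ :=
  deriv (fun s => g s x) t

/-- The box `Ω = [0, L₁] × ⋯ × [0, L_d]`. -/
def box {d : ℕ} (L : Fin d → ℝ) : Set (Fin d → ℝ) :=
  Set.univ.pi fun i => Set.Icc 0 (L i)

/-- Spatial periodicity with periods `L`. -/
def SpacePeriodic {d : ℕ} (L : Fin d → ℝ) (g : (Fin d → ℝ) → ℝ) : Prop :=
  ∀ x i, g (x + Pi.single i (L i)) = g x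

/-- Entropy density `s = -G(∇φ) - ∂_θ f(φ, θ)`. -/
def entS {d : ℕ} (G : (Fin d → ℝ) → ℝ) (f : ℝ → ℝ → ℝ)
    (φ θ : ℝ → (Fin d → ℝ) → ℝ) (t : ℝ) (x : Fin d → ℝ) : ℝ :=
  -G (grad (φ t) x) - deriv (f (φ t x)) (θ t x)

/-- Internal energy density `e = f(φ, θ) - θ ∂_θ f(φ, θ)`. -/
def intE {d : ℕ} (f : ℝ → ℝ → ℝ) (φ θ : ℝ → (Fin d → ℝ) → ℝ)
    (t : ℝ) (x : Fin d → ℝ) : ℝ :=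
  f (φ t x) (θ t x) - θ t x * deriv (f (φ t x)) (θ t x)

/-- Total energy density `e_tot = e + |u|²/2`. -/
def totE {d : ℕ} (f : ℝ → ℝ → ℝ) (φ θ : ℝ → (Fin d → ℝ) → ℝ)
    (u : ℝ → (Fin d → ℝ) → Fin d → ℝ) (t : ℝ) (x : Fin d → ℝ) : ℝ :=
  intE f φ θ t x + (1 / 2) * ∑ i, (u t x i) ^ 2

/-- Chemical potential `μ = -θ div(∇G(∇φ)) + ∂_φ f(φ, θ)`. -/
def chemMu {d : ℕ} (G : (Fin d → ℝ) → ℝ) (f : ℝ → ℝ → ℝ)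
    (φ θ : ℝ → (Fin d → ℝ) → ℝ) (t : ℝ) (x : Fin d → ℝ) : ℝ :=
  -θ t x * divg (fun y => grad G (grad (φ t) y)) x
    + deriv (fun a => f a (θ t x)) (φ t x)

/-- Korteweg stress `σ̃ᵢⱼ = θ (∇G(∇φ))ᵢ ∂ⱼφ`. -/
def korteweg {d : ℕ} (G : (Fin d → ℝ) → ℝ)
    (φ θ : ℝ → (Fin d → ℝ) → ℝ) (t : ℝ) (x : Fin d → ℝ) (i j : Fin d) : ℝ :=
  θ t x * grad G (grad (φ t) x) i * pd j (φ t) x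

/-- Symmetric gradient `Dw = (∇w + (∇w)ᵀ)/2` of a (spatial) vector field. -/
def symGrad {d : ℕ} (w : (Fin d → ℝ) → Fin d → ℝ) (x : Fin d → ℝ) (i j : Fin d) : ℝ :=
  (pd i (fun y => w y j) x + pd j (fun y => w y i) x) / 2

/-! ### Calculus of partial derivatives -/

section PartialDerivatives

variable {d : ℕ} {i : Fin d} {g h : (Fin d → ℝ) → ℝ} {x : Fin d → ℝ}

lemma pd_add (hg : DifferentiableAt ℝ g x) (hh : DifferentiableAt ℝ h x) :
    pd i (fun y => g y + h y) x = pd i g x + pd i h x := by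
  simp only [pd]
  rw [fderiv_fun_add hg hh]; rfl

lemma pd_sub (hg : DifferentiableAt ℝ g x) (hh : DifferentiableAt ℝ h x) :
    pd i (fun y => g y - h y) x = pd i g x - pd i h x := by
  simp only [pd]
  rw [fderiv_fun_sub hg hh]; rfl

lemma pd_mul (hg : DifferentiableAt ℝ g x) (hh : DifferentiableAt ℝ h x) :
    pd i (fun y => g y * h y) x = pd i g x * h x + g x * pd i h x := by
  simp only [pd]
  rw [fderiv_fun_mul hg hh]
  simp only [add_apply, smul_apply, smul_eq_mul]
  ring

lemma pd_sum {ι : Type*} {s : Finset ι} {F : ι → (Fin d → ℝ) → ℝ}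
    (hF : ∀ j ∈ s, DifferentiableAt ℝ (F j) x) :
    pd i (fun y => ∑ j ∈ s, F j y) x = ∑ j ∈ s, pd i (F j) x := by
  simp only [pd]
  rw [fderiv_fun_sum hF]
  simp

lemma pd_half_sum_sq {w : (Fin d → ℝ) → Fin d → ℝ}
    (hw : ∀ j, DifferentiableAt ℝ (fun y => w y j) x) :
    pd i (fun y => (1 / 2) * ∑ j, (w y j) ^ 2) x
      = ∑ j, w x j * pd i (fun y => w y j) x := by
  have hsum : (fun y => (1 / 2) * ∑ j, (w y j) ^ 2)
      = fun y => ∑ j, (1 / 2 * w y j) * w y j := by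
    funext y
    rw [Finset.mul_sum]
    exact Finset.sum_congr rfl fun j _ => by ring
  rw [hsum, pd_sum fun j _ => ((hw j).const_mul _).fun_mul (hw j)]
  refine Finset.sum_congr rfl fun j _ => ?_
  rw [pd_mul ((hw j).const_mul _) (hw j), pd_mul (differentiableAt_const _) (hw j)]
  have : pd i (fun _ => (1 / 2 : ℝ)) x = 0 := by simp [pd]
  rw [this]; ring

lemma contDiff_pd {m n : WithTop ℕ∞} (hg : ContDiff ℝ n g) (hmn : m + 1 ≤ n) :
    ContDiff ℝ m (pd i g) :=
  (hg.fderiv_right hmn).clm_apply contDiff_const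

lemma SpacePeriodic.pd {L : Fin d → ℝ} (hg : SpacePeriodic L g) (i : Fin d) :
    SpacePeriodic L (pd i g) := by
  intro x k
  have hshift : (fun y => g (y + Pi.single k (L k))) = g := funext fun y => hg y k
  unfold _root_.pd
  rw [← fderiv_comp_add_right, hshift]

end PartialDerivatives

/-! ### Integration over the periodic box -/

lemma box_eq_Icc {d : ℕ} (L : Fin d → ℝ) : box L = Set.Icc 0 L :=
  Set.pi_univ_Icc _ _

lemma isCompact_box {d : ℕ} (L : Fin d → ℝ) : IsCompact (box L) := by
  rw [box_eq_Icc]; exact isCompact_Icc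

lemma integrableOn_box {d : ℕ} (L : Fin d → ℝ) {g : (Fin d → ℝ) → ℝ} (hg : Continuous g) :
    IntegrableOn g (box L) :=
  hg.continuousOn.integrableOn_compact (isCompact_box L)

/-- The divergence of a periodic `C¹` field integrates to zero over a period box: in the
divergence theorem the contributions of opposite faces cancel. -/
lemma integral_divg_eq_zero {d : ℕ} {L : Fin d → ℝ} (hL : ∀ i, 0 < L i)
    {V : (Fin d → ℝ) → Fin d → ℝ} (hV : ∀ i, ContDiff ℝ 1 fun y => V y i)
    (hper : ∀ i, SpacePeriodic L fun y => V y i) :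
    ∫ x in box L, divg V x = 0 := by
  cases d with
  | zero => simp [divg]
  | succ n =>
    have hcont : Continuous (divg V) :=
      continuous_finsetSum _ fun i _ => (contDiff_pd (m := 0) (hV i) (by simp)).continuous
    have hint := integrableOn_box L hcont
    rw [box_eq_Icc] at hint ⊢
    have key := integral_divergence_of_hasFDerivAt_off_countable' (0 : Fin (n + 1) → ℝ) L
      (fun i => (hL i).le) (fun i y => V y i) (fun i => fderiv ℝ fun y => V y i) ∅
      Set.countable_empty (fun i => (hV i).continuous.continuousOn)
      (fun x _ i => ((hV i).differentiable (by simp) x).hasFDerivAt) hint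
    refine Eq.trans key (Finset.sum_eq_zero fun i _ => ?_)
    rw [sub_eq_zero]
    congr 1
    funext y
    have hface : i.insertNth (L i) y
        = (i.insertNth ((0 : Fin (n + 1) → ℝ) i) y : Fin (n + 1) → ℝ) + Pi.single i (L i) := by
      funext k
      refine Fin.succAboveCases i ?_ (fun k => ?_) k
      · simp
      · simp [Fin.succAbove_ne]
    change V (i.insertNth (L i) y) i = V (i.insertNth ((0 : Fin (n + 1) → ℝ) i) y) i
    rw [hface]
    exact hper i _ i

/-- Differentiation under the integral sign over the compact box, for an integrand that is
jointly `C¹` in time and space. -/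
lemma hasDerivAt_integral_box {d : ℕ} (L : Fin d → ℝ) {H : ℝ → (Fin d → ℝ) → ℝ}
    (hH : ContDiff ℝ 1 fun q : ℝ × (Fin d → ℝ) => H q.1 q.2) (t : ℝ) :
    HasDerivAt (fun s => ∫ x in box L, H s x) (∫ x in box L, dt H t x) t := by
  have hd : ∀ s x, HasDerivAt (fun s => H s x)
      (fderiv ℝ (fun q : ℝ × (Fin d → ℝ) => H q.1 q.2) (s, x) (1, 0)) s := by
    intro s x
    have h1 := (hH.differentiable (by simp) (s, x)).hasFDerivAt
    have h2 : HasDerivAt (fun s : ℝ => (s, x)) ((1 : ℝ), (0 : Fin d → ℝ)) s :=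
      (hasDerivAt_id s).prodMk (hasDerivAt_const s x)
    exact h1.comp_hasDerivAt s h2
  have hcont : Continuous fun q : ℝ × (Fin d → ℝ) => dt H q.1 q.2 := by
    have : (fun q : ℝ × (Fin d → ℝ) => dt H q.1 q.2)
        = fun q => fderiv ℝ (fun q : ℝ × (Fin d → ℝ) => H q.1 q.2) q (1, 0) :=
      funext fun q => (hd q.1 q.2).deriv
    rw [this]
    exact (hH.continuous_fderiv (by simp)).clm_apply continuous_const
  obtain ⟨C, hC⟩ := ((isCompact_closedBall t 1).prod (isCompact_box L)).exists_bound_of_continuousOn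
    hcont.continuousOn
  refine (hasDerivAt_integral_of_dominated_loc_of_deriv_le (F := H) (F' := dt H)
    (bound := fun _ => C) (Metric.closedBall_mem_nhds t one_pos) ?_ ?_ ?_ ?_ ?_ ?_).2
  · exact Filter.Eventually.of_forall fun s =>
      (hH.continuous.comp (by fun_prop : Continuous fun x => (s, x))).aestronglyMeasurable
  · exact integrableOn_box L (hH.continuous.comp (by fun_prop : Continuous fun x => (t, x)))
  · exact (hcont.comp (by fun_prop : Continuous fun x => (t, x))).aestronglyMeasurable
  · refine (ae_restrict_mem (isCompact_box L).measurableSet).mono fun x hx s hs => ?_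
    exact hC (s, x) ⟨hs, hx⟩
  · exact integrableOn_box L continuous_const
  · exact Filter.Eventually.of_forall fun x s _ => (hd s x).differentiableAt.hasDerivAt

/-! ### Regularity and periodicity of the constitutive fields -/

lemma contDiff_slice {d : ℕ} {g : ℝ → (Fin d → ℝ) → ℝ} {n : WithTop ℕ∞}
    (hg : ContDiff ℝ n fun q : ℝ × (Fin d → ℝ) => g q.1 q.2) (t : ℝ) : ContDiff ℝ n (g t) :=
  hg.comp (by fun_prop : ContDiff ℝ n fun x : Fin d → ℝ => (t, x))

/-- The internal energy is only `C¹`, since it contains `∂_θ f`; positivity of `θ` keeps the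
argument inside the open half plane where `f` is `C²`. -/
lemma contDiff_intE {d : ℕ} {f : ℝ → ℝ → ℝ}
    (hf : ContDiffOn ℝ 2 (fun q : ℝ × ℝ => f q.1 q.2) (Set.univ ×ˢ Set.Ioi 0))
    {φ θ : ℝ → (Fin d → ℝ) → ℝ}
    (hφ : ContDiff ℝ 1 fun q : ℝ × (Fin d → ℝ) => φ q.1 q.2)
    (hθ : ContDiff ℝ 1 fun q : ℝ × (Fin d → ℝ) => θ q.1 q.2)
    (hθpos : ∀ t x, 0 < θ t x) :
    ContDiff ℝ 1 fun q : ℝ × (Fin d → ℝ) => intE f φ θ q.1 q.2 := by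
  have hopen : IsOpen ((Set.univ : Set ℝ) ×ˢ Set.Ioi (0 : ℝ)) := isOpen_univ.prod isOpen_Ioi
  have hmem : ∀ t x, (φ t x, θ t x) ∈ (Set.univ : Set ℝ) ×ˢ Set.Ioi (0 : ℝ) :=
    fun t x => ⟨trivial, hθpos t x⟩
  have hpair : ContDiff ℝ 1 fun q : ℝ × (Fin d → ℝ) => (φ q.1 q.2, θ q.1 q.2) := hφ.prodMk hθ
  have hfC : ContDiff ℝ 1 fun q : ℝ × (Fin d → ℝ) => f (φ q.1 q.2) (θ q.1 q.2) :=
    (hf.of_le (by norm_num)).comp_contDiff hpair fun q => hmem q.1 q.2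
  have hderiv : ∀ q : ℝ × (Fin d → ℝ), deriv (f (φ q.1 q.2)) (θ q.1 q.2)
      = fderiv ℝ (fun q : ℝ × ℝ => f q.1 q.2) (φ q.1 q.2, θ q.1 q.2) (0, 1) := by
    intro q
    have h1 := ((hf.contDiffAt (hopen.mem_nhds (hmem q.1 q.2))).differentiableAt
      (by norm_num)).hasFDerivAt
    have h2 : HasDerivAt (fun b : ℝ => (φ q.1 q.2, b)) ((0 : ℝ), (1 : ℝ)) (θ q.1 q.2) :=
      (hasDerivAt_const _ _).prodMk (hasDerivAt_id _)
    exact (h1.comp_hasDerivAt (θ q.1 q.2) h2).deriv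
  have hfθ : ContDiff ℝ 1 fun q : ℝ × (Fin d → ℝ) => deriv (f (φ q.1 q.2)) (θ q.1 q.2) := by
    simp only [hderiv]
    exact ((hf.fderiv_of_isOpen hopen (m := 1) (by norm_num)).comp_contDiff hpair
      fun q => hmem q.1 q.2).clm_apply contDiff_const
  exact hfC.sub (hθ.mul hfθ)

lemma contDiff_korteweg {d : ℕ} {G : (Fin d → ℝ) → ℝ} (hG : ContDiff ℝ 2 G)
    {φ θ : ℝ → (Fin d → ℝ) → ℝ} {t : ℝ} (hφ : ContDiff ℝ 2 (φ t)) (hθ : ContDiff ℝ 1 (θ t))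
    (i j : Fin d) : ContDiff ℝ 1 fun y => korteweg G φ θ t y i j := by
  have hpd : ∀ k, ContDiff ℝ 1 (pd k (φ t)) := fun k => contDiff_pd hφ (by norm_num)
  have hgrad : ContDiff ℝ 1 (grad (φ t)) := contDiff_pi.2 hpd
  exact (hθ.mul ((contDiff_pd (i := i) hG (m := 1) (by norm_num)).comp hgrad)).mul (hpd j)

lemma contDiff_symGrad {d : ℕ} {w : (Fin d → ℝ) → Fin d → ℝ}
    (hw : ∀ j, ContDiff ℝ 2 fun y => w y j) (i j : Fin d) :
    ContDiff ℝ 1 fun y => symGrad w y i j :=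
  ((contDiff_pd (hw j) (by norm_num)).add (contDiff_pd (hw i) (by norm_num))).div_const 2

lemma SpacePeriodic.korteweg {d : ℕ} {L : Fin d → ℝ} (G : (Fin d → ℝ) → ℝ)
    {φ θ : ℝ → (Fin d → ℝ) → ℝ} {t : ℝ} (hφ : SpacePeriodic L (φ t))
    (hθ : SpacePeriodic L (θ t)) (i j : Fin d) :
    SpacePeriodic L fun y => korteweg G φ θ t y i j := by
  intro x k
  have hgrad : grad (φ t) (x + Pi.single k (L k)) = grad (φ t) x := funext fun l => hφ.pd l x k
  simp only [_root_.korteweg, hgrad, hθ x k, hφ.pd j x k]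

lemma SpacePeriodic.symGrad {d : ℕ} {L : Fin d → ℝ} {w : (Fin d → ℝ) → Fin d → ℝ}
    (hw : ∀ j, SpacePeriodic L fun y => w y j) (i j : Fin d) :
    SpacePeriodic L fun y => symGrad w y i j := by
  intro x k
  simp only [_root_.symGrad, (hw j).pd i x k, (hw i).pd j x k]

/-! ### The energy flux -/

/-- The total energy flux, with the sign for which `∂ₜ e_tot = div(energyFlux) + …`: power
`Aw` of the stress `A` (first index of `A` being the direction of the flux), minus heat flux `k`,
minus convection of internal energy `E`, kinetic energy and pressure `p`. -/
def energyFlux {d : ℕ} (E p : (Fin d → ℝ) → ℝ) (w k : (Fin d → ℝ) → Fin d → ℝ)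
    (A : (Fin d → ℝ) → Fin d → Fin d → ℝ) (y : Fin d → ℝ) (i : Fin d) : ℝ :=
  (∑ j, A y i j * w y j) - k y i - (E y + (1 / 2) * (∑ j, (w y j) ^ 2) + p y) * w y i

lemma divg_energyFlux {d : ℕ} {E p : (Fin d → ℝ) → ℝ} {w k : (Fin d → ℝ) → Fin d → ℝ}
    {A : (Fin d → ℝ) → Fin d → Fin d → ℝ} {x : Fin d → ℝ}
    (hE : DifferentiableAt ℝ E x) (hp : DifferentiableAt ℝ p x)
    (hw : ∀ j, DifferentiableAt ℝ (fun y => w y j) x)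
    (hk : ∀ j, DifferentiableAt ℝ (fun y => k y j) x)
    (hA : ∀ i j, DifferentiableAt ℝ (fun y => A y i j) x) :
    divg (energyFlux E p w k A) x
      = (∑ i, ∑ j, pd i (fun y => A y i j) x * w x j)
        + (∑ i, ∑ j, A x i j * pd i (fun y => w y j) x)
        - divg k x
        - (∑ i, (pd i E x + (∑ j, w x j * pd i (fun y => w y j) x) + pd i p x) * w x i)
        - (E x + (1 / 2) * (∑ j, (w x j) ^ 2) + p x) * divg w x := by
  have hkin : DifferentiableAt ℝ (fun y => (1 / 2) * ∑ j, (w y j) ^ 2) x := by fun_prop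
  have hAw : ∀ i j, DifferentiableAt ℝ (fun y => A y i j * w y j) x :=
    fun i j => (hA i j).mul (hw j)
  have hsum : ∀ i, DifferentiableAt ℝ (fun y => ∑ j, A y i j * w y j) x := by fun_prop
  simp only [divg, energyFlux, Finset.mul_sum (Finset.univ) _ (E x + _ + _),
    ← Finset.sum_add_distrib, ← Finset.sum_sub_distrib]
  refine Finset.sum_congr rfl fun i _ => ?_
  rw [pd_sub ((hsum i).fun_sub (hk i)) (((hE.fun_add hkin).fun_add hp).fun_mul (hw i)),
    pd_sub (hsum i) (hk i), pd_sum fun j _ => hAw i j,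
    pd_mul ((hE.fun_add hkin).fun_add hp) (hw i), pd_add (hE.fun_add hkin) hp, pd_add hE hkin,
    pd_half_sum_sq hw, Finset.sum_congr rfl fun j _ => pd_mul (hA i j) (hw j),
    Finset.sum_add_distrib]
  ring

/-- Symmetry of `Dw` turns its contraction with `∇w` into `|Dw|²`. -/
lemma sum_symGrad_mul_pd {d : ℕ} (w : (Fin d → ℝ) → Fin d → ℝ) (x : Fin d → ℝ) :
    ∑ i, ∑ j, symGrad w x i j * pd i (fun y => w y j) x = ∑ i, ∑ j, (symGrad w x i j) ^ 2 := by
  have hswap : ∑ i, ∑ j, symGrad w x i j * pd i (fun y => w y j) x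
      = ∑ i, ∑ j, symGrad w x i j * pd j (fun y => w y i) x := by
    rw [Finset.sum_comm]
    refine Finset.sum_congr rfl fun i _ => Finset.sum_congr rfl fun j _ => ?_
    simp only [symGrad]; ring
  have hadd : ∑ i, ∑ j, (symGrad w x i j) ^ 2
      = ((∑ i, ∑ j, symGrad w x i j * pd i (fun y => w y j) x)
        + ∑ i, ∑ j, symGrad w x i j * pd j (fun y => w y i) x) / 2 := by
    simp only [← Finset.sum_add_distrib, Finset.sum_div]
    refine Finset.sum_congr rfl fun i _ => Finset.sum_congr rfl fun j _ => ?_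
    simp only [symGrad]; ring
  rw [hadd, ← hswap]; ring

/-- total energy balance and conservation for periodic NACNS solutions. -/
theorem nacns_total_energy_conservation
    {d : ℕ} (hd : d = 1 ∨ d = 2 ∨ d = 3)
    (T : ℝ) (hT : 0 < T) (L : Fin d → ℝ) (hL : ∀ i, 0 < L i)
    (G : (Fin d → ℝ) → ℝ) (hG : ContDiff ℝ 2 G)
    (f : ℝ → ℝ → ℝ)
    (hf : ContDiffOn ℝ 2 (fun q : ℝ × ℝ => f q.1 q.2) (Set.univ ×ˢ Set.Ioi 0))
    (M K η : ℝ → ℝ → ℝ)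
    (hM : ContDiff ℝ (⊤ : ℕ∞) fun q : ℝ × ℝ => M q.1 q.2) (hMpos : ∀ a b, 0 < M a b)
    (hK : ContDiff ℝ (⊤ : ℕ∞) fun q : ℝ × ℝ => K q.1 q.2) (hKpos : ∀ a b, 0 < K a b)
    (hη : ContDiff ℝ (⊤ : ℕ∞) fun q : ℝ × ℝ => η q.1 q.2) (hηpos : ∀ a b, 0 < η a b)
    (φ θ ptilde : ℝ → (Fin d → ℝ) → ℝ)
    (u : ℝ → (Fin d → ℝ) → Fin d → ℝ)
    (Q : ℝ → (Fin d → ℝ) → ℝ) (b : ℝ → (Fin d → ℝ) → Fin d → ℝ)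
    (hφ : ContDiff ℝ (⊤ : ℕ∞) fun q : ℝ × (Fin d → ℝ) => φ q.1 q.2)
    (hθsm : ContDiff ℝ (⊤ : ℕ∞) fun q : ℝ × (Fin d → ℝ) => θ q.1 q.2)
    (hpsm : ContDiff ℝ (⊤ : ℕ∞) fun q : ℝ × (Fin d → ℝ) => ptilde q.1 q.2)
    (husm : ContDiff ℝ (⊤ : ℕ∞) fun q : ℝ × (Fin d → ℝ) => u q.1 q.2)
    (hQsm : ContDiff ℝ (⊤ : ℕ∞) fun q : ℝ × (Fin d → ℝ) => Q q.1 q.2)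
    (hbsm : ContDiff ℝ (⊤ : ℕ∞) fun q : ℝ × (Fin d → ℝ) => b q.1 q.2)
    (hθpos : ∀ t x, 0 < θ t x)
    (hφper : ∀ t, SpacePeriodic L (φ t))
    (hθper : ∀ t, SpacePeriodic L (θ t))
    (hpper : ∀ t, SpacePeriodic L (ptilde t))
    (huper : ∀ t j, SpacePeriodic L fun x => u t x j)
    (hQper : ∀ t, SpacePeriodic L (Q t))
    (hbper : ∀ t j, SpacePeriodic L fun x => b t x j)
    -- (AC): ∂ₜφ + u·∇φ = -Mμ/θ
    (hAC : ∀ t ∈ Set.Ioo (0 : ℝ) T, ∀ x,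
      dt φ t x + dot (u t x) (grad (φ t) x)
        = -(M (φ t x) (θ t x)) * chemMu G f φ θ t x / θ t x)
    -- (IE): ∂ₜe + u·∇e = -div(K∇(1/θ)) + η|Du|² - σ̃:∇u + Q
    (hIE : ∀ t ∈ Set.Ioo (0 : ℝ) T, ∀ x,
      dt (intE f φ θ) t x + dot (u t x) (grad (intE f φ θ t) x)
        = -divg (fun y i => K (φ t y) (θ t y) * pd i (fun z => (θ t z)⁻¹) y) x
          + η (φ t x) (θ t x) * (∑ i, ∑ j, (symGrad (u t) x i j) ^ 2)
          - (∑ i, ∑ j, korteweg G φ θ t x i j * pd i (fun y => u t y j) x)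
          + Q t x)
    -- (NS): ∂ₜu + (u·∇)u = div(ηDu) - ∇p̃ - div(σ̃) + b
    (hNS : ∀ t ∈ Set.Ioo (0 : ℝ) T, ∀ x, ∀ j,
      dt (fun s y => u s y j) t x + ∑ i, u t x i * pd i (fun y => u t y j) x
        = (∑ i, pd i (fun y => η (φ t y) (θ t y) * symGrad (u t) y i j) x)
          - pd j (ptilde t) x
          - (∑ i, pd i (fun y => korteweg G φ θ t y i j) x)
          + b t x j)
    -- (DF): div(u) = 0
    (hDF : ∀ t ∈ Set.Ioo (0 : ℝ) T, ∀ x, divg (u t) x = 0)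
    :
    (∀ t ∈ Set.Ioo (0 : ℝ) T,
      deriv (fun s => ∫ x in box L, totE f φ θ u s x) t
        = (∫ x in box L, Q t x) + ∫ x in box L, dot (b t x) (u t x)) ∧
    ((∀ t x, Q t x = 0) → (∀ t x, b t x = 0) →
      ∀ t₁ ∈ Set.Ioo (0 : ℝ) T, ∀ t₂ ∈ Set.Ioo (0 : ℝ) T,
        (∫ x in box L, totE f φ θ u t₁ x) = ∫ x in box L, totE f φ θ u t₂ x) := by
  have h1le : (1 : WithTop ℕ∞) ≤ ((⊤ : ℕ∞) : WithTop ℕ∞) := by exact_mod_cast le_top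
  have h2le : (2 : WithTop ℕ∞) ≤ ((⊤ : ℕ∞) : WithTop ℕ∞) := 
    WithTop.coe_le_coe.2 (le_top : (2 : ℕ∞) ≤ ⊤)
  have husm' : ∀ j, ContDiff ℝ (⊤ : ℕ∞) fun q : ℝ × (Fin d → ℝ) => u q.1 q.2 j :=
    fun j => contDiff_pi.1 husm j
  have hE : ContDiff ℝ 1 fun q : ℝ × (Fin d → ℝ) => intE f φ θ q.1 q.2 :=
    contDiff_intE hf (hφ.of_le h1le) (hθsm.of_le h1le) hθpos
  have htot : ContDiff ℝ 1 fun q : ℝ × (Fin d → ℝ) => totE f φ θ u q.1 q.2 :=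
    hE.add (contDiff_const.mul (ContDiff.sum fun j _ => ((husm' j).of_le h1le).pow 2))
  have hbalance : ∀ t ∈ Set.Ioo (0 : ℝ) T,
      HasDerivAt (fun s => ∫ x in box L, totE f φ θ u s x)
        ((∫ x in box L, Q t x) + ∫ x in box L, dot (b t x) (u t x)) t := by
    intro t ht
    have hφt := contDiff_slice hφ t
    have hθt := contDiff_slice hθsm t
    have hut : ∀ j, ContDiff ℝ (⊤ : ℕ∞) fun y => u t y j :=
      fun j => contDiff_slice (g := fun s y => u s y j) (husm' j) t
    have hEt : ContDiff ℝ 1 (intE f φ θ t) := contDiff_slice hE t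
    have hpt : ContDiff ℝ 1 (ptilde t) := (contDiff_slice hpsm t).of_le h1le
    have hu1 : ∀ j, ContDiff ℝ 1 fun y => u t y j := fun j => (hut j).of_le h1le
    have hηt : ContDiff ℝ 1 fun y => η (φ t y) (θ t y) :=
      (hη.comp (hφt.prodMk hθt)).of_le h1le
    have hKt : ContDiff ℝ 1 fun y => K (φ t y) (θ t y) :=
      (hK.comp (hφt.prodMk hθt)).of_le h1le
    have hinv : ContDiff ℝ 2 fun y => (θ t y)⁻¹ :=
      (hθt.inv fun y => (hθpos t y).ne').of_le h2le
    have hD := contDiff_symGrad (fun j => (hut j).of_le h2le)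
    have hσ := contDiff_korteweg hG (hφt.of_le h2le) (hθt.of_le h1le)
    set k : (Fin d → ℝ) → Fin d → ℝ :=
      fun y i => K (φ t y) (θ t y) * pd i (fun z => (θ t z)⁻¹) y with hk_def
    set A : (Fin d → ℝ) → Fin d → Fin d → ℝ := fun y i j =>
      η (φ t y) (θ t y) * symGrad (u t) y i j - korteweg G φ θ t y i j with hA_def
    have hk : ∀ i, ContDiff ℝ 1 fun y => k y i :=
      fun i => hKt.mul (contDiff_pd hinv (by norm_num))
    have hA : ∀ i j, ContDiff ℝ 1 fun y => A y i j :=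
      fun i j => (hηt.mul (hD i j)).sub (hσ i j)
    set V := energyFlux (intE f φ θ t) (ptilde t) (u t) k A with hV_def
    have hV : ∀ i, ContDiff ℝ 1 fun y => V y i := fun i =>
      ((ContDiff.sum fun j _ => (hA i j).mul (hu1 j)).sub (hk i)).sub
        (((hEt.add (contDiff_const.mul (ContDiff.sum fun j _ => (hu1 j).pow 2))).add hpt).mul
          (hu1 i))
    have hVper : ∀ i, SpacePeriodic L fun y => V y i := by
      intro i x l
      have hinvper : SpacePeriodic L fun y => (θ t y)⁻¹ := fun x l => by
        simp only [hθper t x l]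
      have e1 := hφper t x l
      have e2 := hθper t x l
      have e3 := hpper t x l
      have e4 := fun j => huper t j x l
      have e5 := hinvper.pd i x l
      have e6 := fun j => SpacePeriodic.symGrad (huper t) i j x l
      have e7 := fun j => SpacePeriodic.korteweg G (hφper t) (hθper t) i j x l
      simp only at e4 e5 e6 e7
      simp only [hV_def, energyFlux, hk_def, hA_def, intE, e1, e2, e3, e4, e5, e6, e7]
    have hlocal : ∀ x, dt (totE f φ θ u) t x
        = divg V x + (Q t x + dot (b t x) (u t x)) := by
      intro x
      have hEd : DifferentiableAt ℝ (fun s => intE f φ θ s x) t :=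
        (hE.comp (by fun_prop : ContDiff ℝ 1 fun s : ℝ => (s, x))).differentiable (by simp) t
      have hud : ∀ j, DifferentiableAt ℝ (fun s => u s x j) t := fun j =>
        (((husm' j).of_le h1le).comp
          (by fun_prop : ContDiff ℝ 1 fun s : ℝ => (s, x))).differentiable (by simp) t
      have hdt : dt (totE f φ θ u) t x
          = dt (intE f φ θ) t x + ∑ j, u t x j * dt (fun s y => u s y j) t x := by
        have hs := HasDerivAt.fun_sum (u := Finset.univ)
          fun j _ => ((hud j).hasDerivAt.pow 2)
        have := (hEd.hasDerivAt.add (hs.const_mul (1 / 2 : ℝ))).deriv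
        refine Eq.trans this ?_
        rw [Finset.mul_sum]
        refine congrArg₂ _ rfl (Finset.sum_congr rfl fun j _ => ?_)
        simp only [dt]
        push_cast
        ring
      have hdiff {g : (Fin d → ℝ) → ℝ} (hg : ContDiff ℝ 1 g) : DifferentiableAt ℝ g x :=
        hg.differentiable (by simp) x
      have hdiv := divg_energyFlux (hdiff hEt) (hdiff hpt) (fun j => hdiff (hu1 j))
        (fun j => hdiff (hk j)) (fun i j => hdiff (hA i j))
      rw [hDF t ht x, mul_zero, sub_zero] at hdiv
      -- The working of the stress in the flux: the gradient part cancels the dissipation and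
      -- Korteweg terms of the internal energy equation.
      have hwork : ∑ i, ∑ j, A x i j * pd i (fun y => u t y j) x
          = η (φ t x) (θ t x) * (∑ i, ∑ j, (symGrad (u t) x i j) ^ 2)
            - ∑ i, ∑ j, korteweg G φ θ t x i j * pd i (fun y => u t y j) x := by
        rw [← sum_symGrad_mul_pd]
        simp only [hA_def, Finset.mul_sum, ← Finset.sum_sub_distrib]
        exact Finset.sum_congr rfl fun i _ => Finset.sum_congr rfl fun j _ => by ring
      -- The kinetic energy equation: the momentum equation tested with `u`.
      have hkin : ∑ j, u t x j * dt (fun s y => u s y j) t x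
          = (∑ i, ∑ j, pd i (fun y => A y i j) x * u t x j)
            - (∑ i, ((∑ j, u t x j * pd i (fun y => u t y j) x) + pd i (ptilde t) x) * u t x i)
            + dot (b t x) (u t x) := by
        have hconv : ∑ i, (∑ j, u t x j * pd i (fun y => u t y j) x) * u t x i
            = ∑ j, u t x j * ∑ i, u t x i * pd i (fun y => u t y j) x := by
          simp only [Finset.sum_mul, Finset.mul_sum]
          rw [Finset.sum_comm]
          exact Finset.sum_congr rfl fun i _ => Finset.sum_congr rfl fun j _ => by ring
        simp only [add_mul, Finset.sum_add_distrib, hconv]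
        rw [Finset.sum_comm, dot, ← Finset.sum_add_distrib, ← Finset.sum_sub_distrib,
          ← Finset.sum_add_distrib]
        refine Finset.sum_congr rfl fun j _ => ?_
        have hAj : ∑ i, pd i (fun y => A y i j) x * u t x j
            = ((∑ i, pd i (fun y => η (φ t y) (θ t y) * symGrad (u t) y i j) x)
              - ∑ i, pd i (fun y => korteweg G φ θ t y i j) x) * u t x j := by
          rw [← Finset.sum_mul, ← Finset.sum_sub_distrib]
          refine congrArg (· * u t x j) (Finset.sum_congr rfl fun i _ => ?_)
          exact pd_sub (hdiff (hηt.mul (hD i j))) (hdiff (hσ i j))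
        rw [hAj]
        linear_combination u t x j * hNS t ht x j
      have hadv : ∑ i, (pd i (intE f φ θ t) x + (∑ j, u t x j * pd i (fun y => u t y j) x)
            + pd i (ptilde t) x) * u t x i
          = dot (u t x) (grad (intE f φ θ t) x)
            + ∑ i, ((∑ j, u t x j * pd i (fun y => u t y j) x)
              + pd i (ptilde t) x) * u t x i := by
        rw [dot, ← Finset.sum_add_distrib]
        exact Finset.sum_congr rfl fun i _ => by simp only [grad]; ring
      rw [hdt, hV_def, hdiv, hwork, hkin, hadv]
      linear_combination hIE t ht x
    have hQc : Continuous (Q t) := (contDiff_slice hQsm t).continuous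
    have hbuc : Continuous fun x => dot (b t x) (u t x) :=
      continuous_finsetSum _ fun j _ =>
        (contDiff_slice (g := fun s y => b s y j) (contDiff_pi.1 hbsm j) t).continuous.mul
          (hut j).continuous
    have hVc : Continuous (divg V) :=
      continuous_finsetSum _ fun i _ => (contDiff_pd (m := 0) (hV i) (by simp)).continuous
    have hsource : IntegrableOn (fun x => Q t x + dot (b t x) (u t x)) (box L) :=
      integrableOn_box L (hQc.add hbuc)
    convert hasDerivAt_integral_box L htot t using 1
    simp only [hlocal]
    rw [integral_add (integrableOn_box L hVc) hsource,
      integral_divg_eq_zero hL hV hVper, zero_add,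
      integral_add (integrableOn_box L hQc) (integrableOn_box L hbuc)]
  refine ⟨fun t ht => (hbalance t ht).deriv, fun hQ0 hb0 t₁ ht₁ t₂ ht₂ => ?_⟩
  refine isOpen_Ioo.is_const_of_deriv_eq_zero isPreconnected_Ioo
    (fun t ht => (hbalance t ht).differentiableAt.differentiableWithinAt) (fun t ht => ?_) ht₁ ht₂
  rw [(hbalance t ht).deriv]
  simp [hQ0, hb0, dot]
end
end

section
/- Let φ, θ, u be smooth fields on (0,T) × ℝ^d with θ > 0 everywhere satisfying the phase-field equation (AC) ∂_tφ + u·∇φ = −Mμ/θ. Then at every point of (0,T) × ℝ^d, the internal energy equation (IE) ∂_te + u·∇e = −div(K∇(1/θ)) + η|Du|² − σ̃:∇u + Q holds if and only if the entropy equation ∂_ts + u·∇s = M(μ/θ)² − (1/θ) div(K∇(1/θ)) + (η/θ)|Du|² − div(∇G(∇φ) ∂_tφ + ∇G(∇φ)(∇φ·u)) + Q/θ holds; that is, given (AC), the internal-energy formulation and the entropy formulation of the NACNS system are pointwise equivalent. -/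
/-!
Write `D = ∂ₜ + u·∇`, and regard every field as a function on space-time `ℝ × ℝᵈ`, so that `D g` at
`(t, x)` is the Fréchet derivative of `g` in the direction `(1, u t x)` (`material_eq`). Since
`D(f(φ, θ)) = ∂_φ f Dφ + ∂_θ f Dθ`, the terms in `Dθ` cancel in `De`, and
* `De = ∂_φ f Dφ - θ D(∂_θ f)` (`material_intE`),
* `Ds = -D(G(∇φ)) - D(∂_θ f)` (`material_entS`).
As `D` and `∂ᵢ` commute up to the derivative of `u` (symmetry of the second derivative of `φ`),
* `div(∇G(∇φ) Dφ) = div(∇G(∇φ)) Dφ + D(G(∇φ)) + (1/θ) σ̃:∇u` (`divg_flux`).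
Hence `θ` times the entropy equation differs from the internal energy equation by `μ Dφ + M μ²/θ`,
which vanishes by (AC).
-/

open MeasureTheory

noncomputable section

/-! ### Material derivatives as space-time derivatives -/

/-- A linear functional on `ℝᵈ` is determined by its values on the standard basis. -/
lemma clm_eq_sum {d : ℕ} (L : (Fin d → ℝ) →L[ℝ] ℝ) (v : Fin d → ℝ) :
    L v = ∑ i, v i * L (Pi.single i 1) := by
  conv_lhs => rw [pi_eq_sum_univ' v]
  simp [map_sum]

lemma dt_eq {d : ℕ} {g : ℝ → (Fin d → ℝ) → ℝ} {t : ℝ} {x : Fin d → ℝ}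
    {L : ℝ × (Fin d → ℝ) →L[ℝ] ℝ}
    (h : HasFDerivAt (fun q : ℝ × (Fin d → ℝ) => g q.1 q.2) L (t, x)) :
    dt g t x = L (1, 0) :=
  (HasFDerivAt.comp_hasDerivAt (f := fun s : ℝ => (s, x)) t h
    ((hasDerivAt_id t).prodMk (hasDerivAt_const t x))).deriv

lemma pd_eq {d : ℕ} {g : ℝ → (Fin d → ℝ) → ℝ} {t : ℝ} {x : Fin d → ℝ}
    {L : ℝ × (Fin d → ℝ) →L[ℝ] ℝ}
    (h : HasFDerivAt (fun q : ℝ × (Fin d → ℝ) => g q.1 q.2) L (t, x)) (i : Fin d) :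
    pd i (g t) x = L (0, Pi.single i 1) := by
  have h2 := HasFDerivAt.comp x h ((hasFDerivAt_const t x).prodMk (hasFDerivAt_id x))
  have h3 : HasFDerivAt (g t) _ x := h2
  unfold pd
  rw [h3.fderiv]
  simp

/-- The material derivative is the space-time derivative in the direction `(1, v)`. -/
lemma material_eq {d : ℕ} {g : ℝ → (Fin d → ℝ) → ℝ} {t : ℝ} {x : Fin d → ℝ}
    {L : ℝ × (Fin d → ℝ) →L[ℝ] ℝ}
    (h : HasFDerivAt (fun q : ℝ × (Fin d → ℝ) => g q.1 q.2) L (t, x)) (v : Fin d → ℝ) :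
    dt g t x + dot v (grad (g t) x) = L (1, v) := by
  have h1 : L (1, v) = L (1, 0) + L.comp (ContinuousLinearMap.inr ℝ ℝ (Fin d → ℝ)) v := by
    simp [← map_add]
  rw [h1, clm_eq_sum, dt_eq h]
  simp [dot, grad, pd_eq h]

lemma material_field {d : ℕ} {φ : ℝ → (Fin d → ℝ) → ℝ}
    (hφ : Differentiable ℝ fun q : ℝ × (Fin d → ℝ) => φ q.1 q.2)
    (t : ℝ) (x v : Fin d → ℝ) :
    dt φ t x + dot v (grad (φ t) x)
      = fderiv ℝ (fun q : ℝ × (Fin d → ℝ) => φ q.1 q.2) (t, x) (1, v) :=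
  material_eq (hφ (t, x)).hasFDerivAt v

/-! ### Thermodynamics: the free energy `f(φ, θ)` and the internal energy -/

lemma contDiffAt_two {f : ℝ → ℝ → ℝ}
    (hf : ContDiffOn ℝ 2 (fun q : ℝ × ℝ => f q.1 q.2) (Set.univ ×ˢ Set.Ioi 0))
    (a : ℝ) {b : ℝ} (hb : 0 < b) :
    ContDiffAt ℝ 2 (fun q : ℝ × ℝ => f q.1 q.2) (a, b) :=
  hf.contDiffAt ((isOpen_univ.prod isOpen_Ioi).mem_nhds ⟨Set.mem_univ _, hb⟩)

lemma deriv_snd_eq {f : ℝ → ℝ → ℝ} {a b : ℝ}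
    (h : DifferentiableAt ℝ (fun q : ℝ × ℝ => f q.1 q.2) (a, b)) :
    deriv (f a) b = fderiv ℝ (fun q : ℝ × ℝ => f q.1 q.2) (a, b) (0, 1) :=
  (HasFDerivAt.comp_hasDerivAt b h.hasFDerivAt
    ((hasDerivAt_const b a).prodMk (hasDerivAt_id b))).deriv

lemma deriv_fst_eq {f : ℝ → ℝ → ℝ} {a b : ℝ}
    (h : DifferentiableAt ℝ (fun q : ℝ × ℝ => f q.1 q.2) (a, b)) :
    deriv (fun c => f c b) a = fderiv ℝ (fun q : ℝ × ℝ => f q.1 q.2) (a, b) (1, 0) :=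
  (HasFDerivAt.comp_hasDerivAt (f := fun c : ℝ => (c, b)) a h.hasFDerivAt
    ((hasDerivAt_id a).prodMk (hasDerivAt_const a b))).deriv

/-- The total differential of `f(φ, θ)` in terms of the partial derivatives of `f`. -/
lemma fderiv_pair_apply {f : ℝ → ℝ → ℝ} {a b : ℝ}
    (h : DifferentiableAt ℝ (fun q : ℝ × ℝ => f q.1 q.2) (a, b)) (α β : ℝ) :
    fderiv ℝ (fun q : ℝ × ℝ => f q.1 q.2) (a, b) (α, β)
      = deriv (fun c => f c b) a * α + deriv (f a) b * β := by
  have e : ((α, β) : ℝ × ℝ) = α • (1, 0) + β • (0, 1) := by simp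
  rw [deriv_snd_eq h, deriv_fst_eq h, e, map_add, map_smul, map_smul, smul_eq_mul, smul_eq_mul]
  ring

/-- The field `∂_θ f(φ, θ)` is differentiable in space-time. -/
lemma differentiable_dtheta {d : ℕ} {f : ℝ → ℝ → ℝ}
    (hf : ContDiffOn ℝ 2 (fun q : ℝ × ℝ => f q.1 q.2) (Set.univ ×ˢ Set.Ioi 0))
    {φ θ : ℝ → (Fin d → ℝ) → ℝ}
    (hφ : Differentiable ℝ fun q : ℝ × (Fin d → ℝ) => φ q.1 q.2)
    (hθ : Differentiable ℝ fun q : ℝ × (Fin d → ℝ) => θ q.1 q.2)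
    (hθpos : ∀ t x, 0 < θ t x) :
    Differentiable ℝ fun q : ℝ × (Fin d → ℝ) => deriv (f (φ q.1 q.2)) (θ q.1 q.2) := by
  have e : (fun q : ℝ × (Fin d → ℝ) => deriv (f (φ q.1 q.2)) (θ q.1 q.2)) = fun q =>
      fderiv ℝ (fun q : ℝ × ℝ => f q.1 q.2) (φ q.1 q.2, θ q.1 q.2) (0, 1) := by
    funext q
    exact deriv_snd_eq
      ((contDiffAt_two hf _ (hθpos _ _)).differentiableAt (by norm_num))
  rw [e]
  intro q
  have h1 : DifferentiableAt ℝ (fderiv ℝ (fun q : ℝ × ℝ => f q.1 q.2))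
      (φ q.1 q.2, θ q.1 q.2) :=
    ((contDiffAt_two hf (φ q.1 q.2) (hθpos q.1 q.2)).fderiv_right
      (m := 1) (by norm_num)).differentiableAt (by norm_num)
  have h2 : DifferentiableAt ℝ
      (fun q : ℝ × (Fin d → ℝ) => (φ q.1 q.2, θ q.1 q.2)) q := (hφ q).prodMk (hθ q)
  exact (DifferentiableAt.comp q h1 h2).clm_apply (differentiableAt_const _)

/-- `De = ∂_φ f Dφ - θ D(∂_θ f)`: the contributions of `Dθ` cancel. -/
lemma material_intE {d : ℕ} {f : ℝ → ℝ → ℝ}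
    (hf : ContDiffOn ℝ 2 (fun q : ℝ × ℝ => f q.1 q.2) (Set.univ ×ˢ Set.Ioi 0))
    {φ θ : ℝ → (Fin d → ℝ) → ℝ}
    (hφ : Differentiable ℝ fun q : ℝ × (Fin d → ℝ) => φ q.1 q.2)
    (hθ : Differentiable ℝ fun q : ℝ × (Fin d → ℝ) => θ q.1 q.2)
    (hθpos : ∀ t x, 0 < θ t x) (t : ℝ) (x v : Fin d → ℝ) :
    dt (intE f φ θ) t x + dot v (grad (intE f φ θ t) x)
      = deriv (fun a => f a (θ t x)) (φ t x) * (dt φ t x + dot v (grad (φ t) x))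
        - θ t x * fderiv ℝ
            (fun q : ℝ × (Fin d → ℝ) => deriv (f (φ q.1 q.2)) (θ q.1 q.2)) (t, x) (1, v) := by
  have hF : DifferentiableAt ℝ (fun q : ℝ × ℝ => f q.1 q.2) (φ t x, θ t x) :=
    (contDiffAt_two hf _ (hθpos _ _)).differentiableAt (by norm_num)
  have hW := (differentiable_dtheta hf hφ hθ hθpos (t, x)).hasFDerivAt
  have hp := (hφ (t, x)).hasFDerivAt.prodMk (hθ (t, x)).hasFDerivAt
  have hE : HasFDerivAt (fun q : ℝ × (Fin d → ℝ) => intE f φ θ q.1 q.2) _ (t, x) :=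
    (HasFDerivAt.comp (t, x) (g := fun q : ℝ × ℝ => f q.1 q.2)
      (f := fun q : ℝ × (Fin d → ℝ) => (φ q.1 q.2, θ q.1 q.2)) hF.hasFDerivAt hp).sub
      ((hθ (t, x)).hasFDerivAt.mul hW)
  rw [material_eq hE, material_field hφ]
  simp [fderiv_pair_apply hF]

/-! ### The gradient of `φ`, the entropy and the entropy flux -/

/-- The entries of `∇φ` as space-time directional derivatives. -/
lemma grad_field_eq {d : ℕ} {φ : ℝ → (Fin d → ℝ) → ℝ}
    (hφ : Differentiable ℝ fun q : ℝ × (Fin d → ℝ) => φ q.1 q.2)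
    (q : ℝ × (Fin d → ℝ)) (i : Fin d) :
    grad (φ q.1) q.2 i
      = fderiv ℝ (fun q : ℝ × (Fin d → ℝ) => φ q.1 q.2) q (0, Pi.single i 1) :=
  pd_eq (hφ q).hasFDerivAt i

/-- The space-time derivative of `∇φ`, expressed by the second derivative of `φ`. -/
lemma hasFDerivAt_grad {d : ℕ} {φ : ℝ → (Fin d → ℝ) → ℝ}
    (hφ : ContDiff ℝ 2 fun q : ℝ × (Fin d → ℝ) => φ q.1 q.2) (q : ℝ × (Fin d → ℝ)) :
    HasFDerivAt (fun q : ℝ × (Fin d → ℝ) => grad (φ q.1) q.2)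
      (ContinuousLinearMap.pi fun i =>
        (fderiv ℝ (fderiv ℝ fun q : ℝ × (Fin d → ℝ) => φ q.1 q.2) q).flip
          (0, Pi.single i 1)) q := by
  have h1 : Differentiable ℝ (fderiv ℝ fun q : ℝ × (Fin d → ℝ) => φ q.1 q.2) :=
    (hφ.fderiv_right (m := 1) (by norm_num)).differentiable (by norm_num)
  rw [hasFDerivAt_pi]
  intro i
  simp only [grad_field_eq (hφ.differentiable (by norm_num))]
  convert (h1 q).hasFDerivAt.clm_apply
    (hasFDerivAt_const ((0, Pi.single i 1) : ℝ × (Fin d → ℝ)) q) using 1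
  simp

/-- `Ds = -∑ᵢ (∇G(∇φ))ᵢ D(∂ᵢφ) - D(∂_θ f)`. -/
lemma material_entS {d : ℕ} {G : (Fin d → ℝ) → ℝ} (hG : Differentiable ℝ G) {f : ℝ → ℝ → ℝ}
    (hf : ContDiffOn ℝ 2 (fun q : ℝ × ℝ => f q.1 q.2) (Set.univ ×ˢ Set.Ioi 0))
    {φ θ : ℝ → (Fin d → ℝ) → ℝ}
    (hφ : ContDiff ℝ 2 fun q : ℝ × (Fin d → ℝ) => φ q.1 q.2)
    (hθ : Differentiable ℝ fun q : ℝ × (Fin d → ℝ) => θ q.1 q.2)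
    (hθpos : ∀ t x, 0 < θ t x) (t : ℝ) (x v : Fin d → ℝ) :
    dt (entS G f φ θ) t x + dot v (grad (entS G f φ θ t) x)
      = -(∑ i, grad G (grad (φ t) x) i *
            fderiv ℝ (fderiv ℝ fun q : ℝ × (Fin d → ℝ) => φ q.1 q.2) (t, x) (1, v)
              (0, Pi.single i 1))
        - fderiv ℝ
            (fun q : ℝ × (Fin d → ℝ) => deriv (f (φ q.1 q.2)) (θ q.1 q.2)) (t, x) (1, v) := by
  have hW := (differentiable_dtheta hf (hφ.differentiable (by norm_num)) hθ hθpos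
    (t, x)).hasFDerivAt
  have hS : HasFDerivAt (fun q : ℝ × (Fin d → ℝ) => entS G f φ θ q.1 q.2) _ (t, x) :=
    (HasFDerivAt.comp (t, x) (g := G)
      (f := fun q : ℝ × (Fin d → ℝ) => grad (φ q.1) q.2)
      (hG _).hasFDerivAt (hasFDerivAt_grad hφ (t, x))).neg.sub hW
  rw [material_eq hS]
  simp only [sub_apply, neg_apply,
    ContinuousLinearMap.comp_apply]
  rw [clm_eq_sum (fderiv ℝ G _)]
  simp [grad, pd, mul_comm]

/-- `∂ᵢ(Dφ) = D(∂ᵢφ) + ∑ⱼ ∂ⱼφ ∂ᵢuⱼ`, by symmetry of the second derivative of `φ`. -/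
lemma hasFDerivAt_material {d : ℕ} {φ : ℝ → (Fin d → ℝ) → ℝ}
    {u : ℝ → (Fin d → ℝ) → Fin d → ℝ}
    (hφ : ContDiff ℝ 2 fun q : ℝ × (Fin d → ℝ) => φ q.1 q.2)
    (hu : Differentiable ℝ fun q : ℝ × (Fin d → ℝ) => u q.1 q.2)
    (t : ℝ) (x : Fin d → ℝ) :
    ∃ L : ℝ × (Fin d → ℝ) →L[ℝ] ℝ, HasFDerivAt
      (fun q : ℝ × (Fin d → ℝ) => dt φ q.1 q.2 + dot (u q.1 q.2) (grad (φ q.1) q.2)) L (t, x) ∧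
      ∀ i : Fin d, L (0, Pi.single i 1)
        = fderiv ℝ (fderiv ℝ fun q : ℝ × (Fin d → ℝ) => φ q.1 q.2) (t, x) (1, u t x)
            (0, Pi.single i 1)
          + ∑ j, pd j (φ t) x * pd i (fun y => u t y j) x := by
  have hφ1 := hφ.differentiable (by norm_num)
  have h1 : Differentiable ℝ (fderiv ℝ fun q : ℝ × (Fin d → ℝ) => φ q.1 q.2) :=
    (hφ.fderiv_right (m := 1) (by norm_num)).differentiable (by norm_num)
  simp only [material_field hφ1]
  refine ⟨_, (h1 (t, x)).hasFDerivAt.clm_apply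
    ((hasFDerivAt_const (1 : ℝ) (t, x)).prodMk (hu (t, x)).hasFDerivAt), fun i => ?_⟩
  have hsymm : IsSymmSndFDerivAt ℝ (fun q : ℝ × (Fin d → ℝ) => φ q.1 q.2) (t, x) :=
    hφ.contDiffAt.isSymmSndFDerivAt (by simp)
  have hsum : ∀ w : Fin d → ℝ,
      fderiv ℝ (fun q : ℝ × (Fin d → ℝ) => φ q.1 q.2) (t, x) (0, w)
        = ∑ j, pd j (φ t) x * w j := by
    intro w
    have := clm_eq_sum ((fderiv ℝ (fun q : ℝ × (Fin d → ℝ) => φ q.1 q.2) (t, x)).comp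
      (ContinuousLinearMap.inr ℝ ℝ (Fin d → ℝ))) w
    simp only [ContinuousLinearMap.comp_apply, ContinuousLinearMap.inr_apply] at this
    rw [this]
    refine Finset.sum_congr rfl fun j _ => ?_
    rw [pd_eq (hφ1 (t, x)).hasFDerivAt j, mul_comm]
  have hpu : ∀ j, pd i (fun y => u t y j) x
      = fderiv ℝ (fun q : ℝ × (Fin d → ℝ) => u q.1 q.2) (t, x) (0, Pi.single i 1) j := by
    intro j
    exact pd_eq (g := fun t y => u t y j) (hasFDerivAt_pi'.1 (hu (t, x)).hasFDerivAt j) i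
  simp only [hpu]
  rw [← hsum, ← hsymm.eq (0, Pi.single i 1) (1, u t x)]
  simp [add_comm]

/-- `div(∇G(∇φ) Dφ) = div(∇G(∇φ)) Dφ + ∑ᵢ (∇G(∇φ))ᵢ D(∂ᵢφ) + ∑ᵢⱼ (∇G(∇φ))ᵢ ∂ⱼφ ∂ᵢuⱼ`. -/
lemma divg_flux {d : ℕ} {G : (Fin d → ℝ) → ℝ} (hG : ContDiff ℝ 2 G)
    {φ : ℝ → (Fin d → ℝ) → ℝ} {u : ℝ → (Fin d → ℝ) → Fin d → ℝ}
    (hφ : ContDiff ℝ 2 fun q : ℝ × (Fin d → ℝ) => φ q.1 q.2)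
    (hu : Differentiable ℝ fun q : ℝ × (Fin d → ℝ) => u q.1 q.2)
    (t : ℝ) (x : Fin d → ℝ) :
    divg (fun y i => grad G (grad (φ t) y) i * dt φ t y
        + grad G (grad (φ t) y) i * dot (grad (φ t) y) (u t y)) x
      = divg (fun y => grad G (grad (φ t) y)) x * (dt φ t x + dot (u t x) (grad (φ t) x))
        + ∑ i, grad G (grad (φ t) x) i *
            fderiv ℝ (fderiv ℝ fun q : ℝ × (Fin d → ℝ) => φ q.1 q.2) (t, x) (1, u t x)
              (0, Pi.single i 1)
        + ∑ i, ∑ j, grad G (grad (φ t) x) i * pd j (φ t) x * pd i (fun y => u t y j) x := by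
  obtain ⟨L, hL, hLi⟩ := hasFDerivAt_material hφ hu t x
  have hslice : HasFDerivAt (𝕜 := ℝ) (fun y : Fin d → ℝ => ((t, y) : ℝ × (Fin d → ℝ))) _ x :=
    (hasFDerivAt_const t x).prodMk (hasFDerivAt_id x)
  have hR : DifferentiableAt ℝ
      (fun y => dt φ t y + dot (u t y) (grad (φ t) y)) x :=
    (HasFDerivAt.comp x hL hslice).differentiableAt
  have hGd : Differentiable ℝ (fderiv ℝ G) :=
    (hG.fderiv_right (m := 1) (by norm_num)).differentiable (by norm_num)
  have hgr : DifferentiableAt ℝ (fun y => grad (φ t) y) x :=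
    (HasFDerivAt.comp x (hasFDerivAt_grad hφ (t, x)) hslice).differentiableAt
  have hA : ∀ i, DifferentiableAt ℝ (fun y => grad G (grad (φ t) y) i) x := fun i =>
    (DifferentiableAt.comp x (hGd _) hgr).clm_apply (differentiableAt_const _)
  simp only [divg]
  rw [Finset.sum_mul, ← Finset.sum_add_distrib, ← Finset.sum_add_distrib]
  refine Finset.sum_congr rfl fun i _ => ?_
  have e : (fun y => grad G (grad (φ t) y) i * dt φ t y
        + grad G (grad (φ t) y) i * dot (grad (φ t) y) (u t y))
      = fun y => grad G (grad (φ t) y) i * (dt φ t y + dot (u t y) (grad (φ t) y)) := by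
    funext y
    simp only [dot, mul_add, mul_comm (u t y _)]
  have hpR := pd_eq (g := fun t y => dt φ t y + dot (u t y) (grad (φ t) y)) hL i
  rw [hLi] at hpR
  rw [e]
  have hprod : pd i (fun y =>
        grad G (grad (φ t) y) i * (dt φ t y + dot (u t y) (grad (φ t) y))) x
      = grad G (grad (φ t) x) i * pd i (fun y => dt φ t y + dot (u t y) (grad (φ t) y)) x
        + pd i (fun y => grad G (grad (φ t) y) i) x
          * (dt φ t x + dot (u t x) (grad (φ t) x)) := by
    unfold pd
    rw [fderiv_fun_mul (hA i) hR]
    simp only [add_apply, smul_apply, smul_eq_mul]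
    ring
  rw [hprod, hpR, mul_add, Finset.mul_sum]
  simp only [mul_assoc]
  ring

/-- given (AC), the internal-energy equation and the entropy equation are pointwise equivalent. -/
theorem internal_energy_iff_entropy_equation
    {d : ℕ} (hd : d = 1 ∨ d = 2 ∨ d = 3)
    (T : ℝ) (hT : 0 < T)
    (G : (Fin d → ℝ) → ℝ) (hG : ContDiff ℝ 2 G)
    (f : ℝ → ℝ → ℝ)
    (hf : ContDiffOn ℝ 2 (fun q : ℝ × ℝ => f q.1 q.2) (Set.univ ×ˢ Set.Ioi 0))
    (M K η : ℝ → ℝ → ℝ)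
    (hM : ContDiff ℝ (⊤ : ℕ∞) fun q : ℝ × ℝ => M q.1 q.2) (hMpos : ∀ a b, 0 < M a b)
    (hK : ContDiff ℝ (⊤ : ℕ∞) fun q : ℝ × ℝ => K q.1 q.2) (hKpos : ∀ a b, 0 < K a b)
    (hη : ContDiff ℝ (⊤ : ℕ∞) fun q : ℝ × ℝ => η q.1 q.2) (hηpos : ∀ a b, 0 < η a b)
    (φ θ : ℝ → (Fin d → ℝ) → ℝ) (u : ℝ → (Fin d → ℝ) → Fin d → ℝ)
    (Q : ℝ → (Fin d → ℝ) → ℝ)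
    (hφ : ContDiff ℝ (⊤ : ℕ∞) fun q : ℝ × (Fin d → ℝ) => φ q.1 q.2)
    (hθsm : ContDiff ℝ (⊤ : ℕ∞) fun q : ℝ × (Fin d → ℝ) => θ q.1 q.2)
    (husm : ContDiff ℝ (⊤ : ℕ∞) fun q : ℝ × (Fin d → ℝ) => u q.1 q.2)
    (hQsm : ContDiff ℝ (⊤ : ℕ∞) fun q : ℝ × (Fin d → ℝ) => Q q.1 q.2)
    (hθpos : ∀ t x, 0 < θ t x)
    -- (AC): ∂ₜφ + u·∇φ = -Mμ/θ
    (hAC : ∀ t ∈ Set.Ioo (0 : ℝ) T, ∀ x,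
      dt φ t x + dot (u t x) (grad (φ t) x)
        = -(M (φ t x) (θ t x)) * chemMu G f φ θ t x / θ t x)
    :
    ∀ t ∈ Set.Ioo (0 : ℝ) T, ∀ x,
      (dt (intE f φ θ) t x + dot (u t x) (grad (intE f φ θ t) x)
          = -divg (fun y i => K (φ t y) (θ t y) * pd i (fun z => (θ t z)⁻¹) y) x
            + η (φ t x) (θ t x) * (∑ i, ∑ j, (symGrad (u t) x i j) ^ 2)
            - (∑ i, ∑ j, korteweg G φ θ t x i j * pd i (fun y => u t y j) x)
            + Q t x)
      ↔
      (dt (entS G f φ θ) t x + dot (u t x) (grad (entS G f φ θ t) x)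
          = M (φ t x) (θ t x) * (chemMu G f φ θ t x / θ t x) ^ 2
            - (θ t x)⁻¹ *
                divg (fun y i => K (φ t y) (θ t y) * pd i (fun z => (θ t z)⁻¹) y) x
            + η (φ t x) (θ t x) / θ t x * (∑ i, ∑ j, (symGrad (u t) x i j) ^ 2)
            - divg (fun y i =>
                grad G (grad (φ t) y) i * dt φ t y
                  + grad G (grad (φ t) y) i * dot (grad (φ t) y) (u t y)) x
            + Q t x / θ t x) := by
  intro t ht x
  have hφ2 : ContDiff ℝ 2 fun q : ℝ × (Fin d → ℝ) => φ q.1 q.2 :=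
    by exact_mod_cast contDiff_infty.1 hφ 2
  have hθ1 := hθsm.differentiable (by norm_num)
  have hu1 := husm.differentiable (by norm_num)
  have hac := hAC t ht x
  have hθ0 : θ t x ≠ 0 := (hθpos t x).ne'
  have hkort : (∑ i, ∑ j, korteweg G φ θ t x i j * pd i (fun y => u t y j) x)
      = θ t x * ∑ i, ∑ j, grad G (grad (φ t) x) i * pd j (φ t) x
          * pd i (fun y => u t y j) x := by
    simp only [korteweg, Finset.mul_sum, mul_assoc]
  rw [material_intE hf (hφ2.differentiable (by norm_num)) hθ1 hθpos,
    material_entS (hG.differentiable (by norm_num)) hf hφ2 hθ1 hθpos,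
    divg_flux hG hφ2 hu1, hkort, hac]
  -- Rewriting `∂_φ f` by `μ` leaves an identity of rational functions with denominators `θ` only.
  have hμ : deriv (fun a => f a (θ t x)) (φ t x)
      = chemMu G f φ θ t x + θ t x * divg (fun y => grad G (grad (φ t) y)) x := by
    simp only [chemMu]; ring
  rw [hμ]
  generalize chemMu G f φ θ t x = μ
  generalize divg (fun y => grad G (grad (φ t) y)) x = dG
  generalize θ t x = τ at *
  -- The residual of the internal energy equation is `θ` times that of the entropy equation.
  rw [← sub_eq_zero, ← sub_eq_zero (b := M _ _ * _ - _ + _ - _ + _)]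
  rw [← mul_eq_zero_iff_left hθ0 (b := _ - (M _ _ * _ - _ + _ - _ + _))]
  refine Eq.congr ?_ rfl
  field_simp
  ring
end
end
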